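/- For every finite subset A of ℂ such that A^sym = A, every b ∈ ℂ \ (ℝ ∪ iℝ ∪ A) and every λ ∈ ℂ, there exists a real and even polynomial map Q : ℂ → ℂ of degree at most 2|A| + 6 such that Q(a) = 0 and Q'(a) = 0 for all a ∈ A, Q(b) = 0 and Q'(b) = λ. -/

import Mathlib

/-!
Let `R = ∏ a ∈ A, (X - a)`. The symmetry of `A` makes `R` real and `R(-z) = ± R(z)`, so `R ^ 2` is
real and even, with a double zero at every point of `A` and `R(b) ≠ 0`. The real even quartic
`(X ^ 2 - b ^ 2) (X ^ 2 - conj b ^ 2)` has a simple zero at `b`, because `b` lies off both axes.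
Multiplying the two by `c + d X ^ 2` with real `c` and `d` leaves the polynomial real and even, and its
derivative at `b` is a nonzero constant times `c + d b ^ 2`. Since `b ^ 2` is not real, `1` and
`b ^ 2` span `ℂ` over `ℝ`, so every value of the derivative is attained.
-/

open Polynomial in
theorem prod_X_sub_C_map_conj (A : Finset ℂ) (hAconj : ∀ a ∈ A, starRingEnd ℂ a ∈ A) :
    (∏ a ∈ A, (X - C a)).map (starRingEnd ℂ) = ∏ a ∈ A, (X - C a) := by
  rw [Polynomial.map_prod]
  refine Finset.prod_nbij' (starRingEnd ℂ) (starRingEnd ℂ) hAconj hAconj ?_ ?_ ?_ <;> simp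

open Polynomial in
theorem prod_X_sub_C_sq_eval_neg (A : Finset ℂ) (hAneg : ∀ a ∈ A, -a ∈ A) (z : ℂ) :
    (∏ a ∈ A, (X - C a)).eval (-z) ^ 2 = (∏ a ∈ A, (X - C a)).eval z ^ 2 := by
  simp only [eval_prod, eval_sub, eval_X, eval_C, ← Finset.prod_pow]
  refine Finset.prod_nbij' (fun a => -a) (fun a => -a) hAneg hAneg ?_ ?_ ?_
  · simp
  · simp
  · intro a _
    ring

theorem exists_real_add_real_mul (u w : ℂ) (hu : u.im ≠ 0) :
    ∃ c d : ℝ, (c : ℂ) + d * u = w := by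
  refine ⟨w.re - w.im / u.im * u.re, w.im / u.im, ?_⟩
  apply Complex.ext
  · simp
  · simp [hu]

/-- **Lemma (real even interpolation of a derivative off the axes).** For every finite
subset `A` of `ℂ` symmetric with respect to the real and imaginary axes (`A^sym = A`),
every `b ∈ ℂ \ (ℝ ∪ iℝ ∪ A)` and every `λ ∈ ℂ`, there exists a real and even polynomial
`Q` of degree at most `2|A| + 6` vanishing together with its derivative on `A`, with
`Q(b) = 0` and `Q'(b) = λ`. -/
theorem exists_real_even_polynomial_derivative_off_axes (A : Finset ℂ)
    (hAconj : ∀ a ∈ A, starRingEnd ℂ a ∈ A) (hAneg : ∀ a ∈ A, -a ∈ A)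
    (b : ℂ) (hbre : b.im ≠ 0) (hbim : b.re ≠ 0) (hbA : b ∉ A) (lam : ℂ) :
    ∃ Q : Polynomial ℂ, Q.natDegree ≤ 2 * A.card + 6 ∧
      (∀ n : ℕ, (Q.coeff n).im = 0) ∧
      (∀ z : ℂ, Q.eval (-z) = Q.eval z) ∧
      (∀ a ∈ A, Q.eval a = 0) ∧ (∀ a ∈ A, Q.derivative.eval a = 0) ∧
      Q.eval b = 0 ∧ Q.derivative.eval b = lam := by
  open Polynomial in
  have hsq : (b ^ 2).im ≠ 0 := by
    have h : (b ^ 2).im = 2 * (b.re * b.im) := by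
      rw [sq, Complex.mul_im]
      ring
    rw [h]
    exact mul_ne_zero two_ne_zero (mul_ne_zero hbim hbre)
  have hb0 : b ≠ 0 := by
    rintro rfl
    simp at hbim
  have hdiff : b ^ 2 - starRingEnd ℂ b ^ 2 ≠ 0 := by
    intro h
    apply hsq
    rw [← Complex.conj_eq_iff_im, map_pow]
    exact (sub_eq_zero.mp h).symm
  obtain ⟨R, hR⟩ : ∃ R : ℂ[X], R = ∏ a ∈ A, (X - C a) := ⟨_, rfl⟩
  have hRb : R.eval b ≠ 0 := by
    rw [hR, eval_prod, Finset.prod_ne_zero_iff]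
    intro a ha h
    simp only [eval_sub, eval_X, eval_C, sub_eq_zero] at h
    exact hbA (h ▸ ha)
  have hRA : ∀ a ∈ A, R.eval a = 0 := by
    intro a ha
    rw [hR, eval_prod]
    exact Finset.prod_eq_zero ha (by simp)
  have hRconj : R.map (starRingEnd ℂ) = R := hR ▸ prod_X_sub_C_map_conj A hAconj
  have hRneg : ∀ z, R.eval (-z) ^ 2 = R.eval z ^ 2 := hR ▸ prod_X_sub_C_sq_eval_neg A hAneg
  have hRdeg : R.natDegree = A.card := by
    rw [hR, natDegree_finsetProd_X_sub_C_eq_card]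
  -- The derivative of the product at `b` is `K * (c + d * b ^ 2)`.
  obtain ⟨K, hK⟩ : ∃ K : ℂ, K = R.eval b ^ 2 * (2 * b * (b ^ 2 - starRingEnd ℂ b ^ 2)) := ⟨_, rfl⟩
  have hK0 : K ≠ 0 := by
    rw [hK]
    exact mul_ne_zero (pow_ne_zero _ hRb) (mul_ne_zero (mul_ne_zero two_ne_zero hb0) hdiff)
  obtain ⟨c, d, hcd⟩ := exists_real_add_real_mul (b ^ 2) (lam / K) hsq
  refine ⟨R ^ 2 * ((X ^ 2 - C (b ^ 2)) * (X ^ 2 - C (starRingEnd ℂ b ^ 2)) *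
    (C (c : ℂ) + C (d : ℂ) * X ^ 2)), ?_, ?_, ?_, ?_, ?_, ?_, ?_⟩
  · have h1 : (R ^ 2).natDegree ≤ 2 * A.card := by
      rw [← hRdeg]
      exact natDegree_pow_le
    refine natDegree_mul_le_of_le h1 ?_
    compute_degree
  · intro n
    rw [← Complex.conj_eq_iff_im, ← coeff_map]
    congr 1
    simp only [Polynomial.map_mul, Polynomial.map_pow, Polynomial.map_sub, Polynomial.map_add,
      map_X, map_C, hRconj, map_pow, Complex.conj_conj, Complex.conj_ofReal]
    ring
  · intro z
    simp only [eval_mul, eval_pow, eval_sub, eval_add, eval_X, eval_C, hRneg, neg_sq]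
  · intro a ha
    simp [hRA a ha]
  · intro a ha
    simp [derivative_mul, derivative_pow, hRA a ha]
  · simp
  · have h : lam = K * (c + d * b ^ 2) := by
      rw [hcd]
      field_simp
    rw [h, hK]
    simp [derivative_mul, derivative_pow]
    ring
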